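/- arXiv:2507.13866 — 4 statements merged into one kernel-verified Lean document; each statement's English description precedes it below -/
import Mathlib

section
/- Let I ⊊ J be ideals on ℕ and let k be a positive integer. If J is complemented and I is k-maximal in J, then I is complemented. -/
open Set

def IsIdeal (I : Set (Set ℕ)) : Prop :=
  (∀ A : Set ℕ, A.Finite → A ∈ I) ∧
  (∀ A B : Set ℕ, A ⊆ B → B ∈ I → A ∈ I) ∧
  (∀ A B : Set ℕ, A ∈ I → B ∈ I → A ∪ B ∈ I)

def IsProperIdeal (I : Set (Set ℕ)) : Prop := IsIdeal I ∧ (Set.univ : Set ℕ) ∉ I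

def IsMaxIdeal (I : Set (Set ℕ)) : Prop :=
  IsProperIdeal I ∧ ∀ A : Set ℕ, A ∈ I ∨ Aᶜ ∈ I

/-- `I` is `k`-maximal in `J`: `I` is the intersection of `J` with `k` pairwise distinct
maximal ideals, none of which contains `J`. -/
def kMaximalIn (I J : Set (Set ℕ)) (k : ℕ) : Prop :=
  ∃ L : Fin k → Set (Set ℕ), Function.Injective L ∧ (∀ i, IsMaxIdeal (L i)) ∧
    (∀ i, ¬ J ⊆ L i) ∧ I = (⋂ i, L i) ∩ J

/-- ℓ∞, the space of bounded real sequences with the sup norm. -/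
noncomputable abbrev ellInf := lp (fun _ : ℕ => ℝ) ⊤

/-- The indicator sequence of a set `A ⊆ ℕ`, as an element of ℓ∞. -/
noncomputable def chi (A : Set ℕ) : ellInf :=
  ⟨A.indicator (fun _ => (1:ℝ)), by
    apply memℓp_infty
    refine ⟨1, ?_⟩
    rintro r ⟨n, rfl⟩
    by_cases h : n ∈ A <;> simp [h]⟩

/-- `c_{0,I}`: the set of bounded sequences `I`-converging to `0`. -/
def c0I (I : Set (Set ℕ)) : Set ellInf := {x | ∀ ε > 0, {n : ℕ | ε ≤ |x n|} ∈ I}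

/-- An ideal `I` is complemented if `c_{0,I}` is the range of a continuous
linear projection on ℓ∞. -/
def IdealComplemented (I : Set (Set ℕ)) : Prop :=
  ∃ P : ellInf →L[ℝ] ellInf, (∀ x, P (P x) = P x) ∧ Set.range P = c0I I

/-!
A maximal ideal `L` is dual to an ultrafilter, and `c_{0,L}` is the kernel of the limit along that
ultrafilter, a continuous functional on `ℓ∞`. Hence, for `I = L₁ ∩ ⋯ ∩ L_k ∩ J`, the space `c_{0,I}`
is the intersection of `c_{0,J}` with the kernel of a continuous map `ℓ∞ → ℝᵏ`. It therefore has
finite codimension in `c_{0,J}`, so it is complemented there, and then also in `ℓ∞`.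
-/

open Filter Topology ENNReal

theorem closedComplemented_map_subtype {R M : Type*} [Ring R] [TopologicalSpace M]
    [AddCommGroup M] [Module R M] {p : Submodule R M} {q : Submodule R p}
    (hp : p.ClosedComplemented) (hq : q.ClosedComplemented) :
    (q.map p.subtype).ClosedComplemented := by
  obtain ⟨f, hf⟩ := hp
  obtain ⟨g, hg⟩ := hq
  refine ⟨(p.subtypeL ∘L q.subtypeL ∘L g ∘L f).codRestrict _
    fun x => Submodule.mem_map_of_mem (g (f x)).2, ?_⟩
  rintro ⟨_, x, hx, rfl⟩
  have hgf : g (f x) = ⟨x, hx⟩ := by rw [hf x, hg ⟨x, hx⟩]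
  exact Subtype.ext (congrArg (fun y : q => (y : M)) hgf)

theorem closedComplemented_inf_ker {𝕜 E F : Type*} [NontriviallyNormedField 𝕜] [CompleteSpace 𝕜]
    [AddCommGroup E] [Module 𝕜 E] [TopologicalSpace E] [IsTopologicalAddGroup E]
    [ContinuousSMul 𝕜 E] [AddCommGroup F] [Module 𝕜 F] [TopologicalSpace F] [T2Space F]
    {p : Submodule 𝕜 E} (hp : p.ClosedComplemented) (f : E →L[𝕜] F)
    [FiniteDimensional 𝕜 f.range] : (p ⊓ f.ker).ClosedComplemented := by
  let g : p →L[𝕜] F := f ∘L p.subtypeL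
  have : FiniteDimensional 𝕜 g.range :=
    Submodule.finiteDimensional_of_le (LinearMap.range_comp_le_range _ _)
  have hmap : g.ker.map p.subtype = p ⊓ f.ker := by
    ext x
    simp [g, and_comm]
  exact hmap ▸ closedComplemented_map_subtype hp g.ker_closedComplemented_of_finiteDimensional_range

section UltrafilterLimit

variable {ι : Type*}

theorem exists_tendsto_ultrafilter_of_isBounded_range {X : Type*} [PseudoMetricSpace X]
    [ProperSpace X] (U : Ultrafilter ι) {f : ι → X} (hf : Bornology.IsBounded (range f)) :
    ∃ a, Tendsto f U (𝓝 a) := by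
  have hmem : range f ∈ U.map f := range_mem_map
  obtain ⟨a, -, ha⟩ := hf.isCompact_closure.ultrafilter_le_nhds (U.map f)
    (le_principal_iff.2 (mem_of_superset hmem subset_closure))
  exact ⟨a, ha⟩

variable {E : Type*} [NormedAddCommGroup E] [ProperSpace E]

theorem tendsto_ultrafilter_limUnder (U : Ultrafilter ι) (x : lp (fun _ : ι => E) ∞) :
    Tendsto x U (𝓝 (limUnder U x)) := by
  refine tendsto_nhds_limUnder (exists_tendsto_ultrafilter_of_isBounded_range U ?_)
  refine isBounded_iff_forall_norm_le.2 ⟨‖x‖, ?_⟩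
  exact forall_mem_range.2 fun i => lp.norm_apply_le_norm top_ne_zero x i

variable (𝕜 : Type*) [NormedField 𝕜] [NormedSpace 𝕜 E]

/-- The limit along an ultrafilter, as a continuous linear map on bounded families in a proper
normed space; properness is what makes every such limit exist. -/
noncomputable def ultrafilterLim (U : Ultrafilter ι) : lp (fun _ : ι => E) ∞ →L[𝕜] E :=
  LinearMap.mkContinuous
    { toFun x := limUnder U x
      map_add' x y :=
        ((tendsto_ultrafilter_limUnder U x).add (tendsto_ultrafilter_limUnder U y)).limUnder_eq
      map_smul' c x := ((tendsto_ultrafilter_limUnder U x).const_smul c).limUnder_eq }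
    1 fun x => by
      rw [one_mul]
      exact le_of_tendsto (tendsto_ultrafilter_limUnder U x).norm
        (Eventually.of_forall (lp.norm_apply_le_norm top_ne_zero x))

theorem ultrafilterLim_eq_iff_tendsto {U : Ultrafilter ι} {x : lp (fun _ : ι => E) ∞} {a : E} :
    ultrafilterLim 𝕜 U x = a ↔ Tendsto x U (𝓝 a) :=
  limUnder_eq_iff ⟨_, tendsto_ultrafilter_limUnder U x⟩

end UltrafilterLimit

/-- The filter `I* = {A : Aᶜ ∈ I}` dual to an ideal `I`. -/
def IsIdeal.dualFilter {I : Set (Set ℕ)} (hI : IsIdeal I) : Filter ℕ :=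
  comk (· ∈ I) (hI.1 ∅ finite_empty) (fun B hB A hAB => hI.2.1 A B hAB hB)
    fun A hA B hB => hI.2.2 A B hA hB

theorem IsIdeal.mem_dualFilter {I : Set (Set ℕ)} (hI : IsIdeal I) {A : Set ℕ} :
    A ∈ hI.dualFilter ↔ Aᶜ ∈ I :=
  mem_comk

theorem mem_c0I_iff_tendsto {I : Set (Set ℕ)} (hI : IsIdeal I) {x : ellInf} :
    x ∈ c0I I ↔ Tendsto x hI.dualFilter (𝓝 0) := by
  have hcompl (ε : ℝ) : {n | dist (x n) 0 < ε}ᶜ = {n | ε ≤ |x n|} := by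
    ext n
    simp
  rw [Metric.tendsto_nhds]
  refine forall₂_congr fun ε _ => ?_
  rw [Filter.Eventually, hI.mem_dualFilter, hcompl]

theorem IsMaxIdeal.compl_mem_iff {L : Set (Set ℕ)} (hL : IsMaxIdeal L) {A : Set ℕ} :
    Aᶜ ∈ L ↔ A ∉ L := by
  refine ⟨fun hAc hA => hL.1.2 ?_, (hL.2 A).resolve_left⟩
  simpa only [union_compl_self] using hL.1.1.2.2 A Aᶜ hA hAc

/-- The ultrafilter `L*` dual to a maximal ideal `L`. -/
def IsMaxIdeal.dualUltrafilter {L : Set (Set ℕ)} (hL : IsMaxIdeal L) : Ultrafilter ℕ :=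
  .ofComplNotMemIff hL.1.1.dualFilter fun A => by
    simp only [hL.1.1.mem_dualFilter, hL.compl_mem_iff, not_not]

theorem IsMaxIdeal.coe_dualUltrafilter {L : Set (Set ℕ)} (hL : IsMaxIdeal L) :
    (hL.dualUltrafilter : Filter ℕ) = hL.1.1.dualFilter :=
  rfl

theorem mem_c0I_iff_ultrafilterLim_eq_zero {L : Set (Set ℕ)} (hL : IsMaxIdeal L) {x : ellInf} :
    x ∈ c0I L ↔ ultrafilterLim ℝ hL.dualUltrafilter x = 0 := by
  rw [ultrafilterLim_eq_iff_tendsto, hL.coe_dualUltrafilter, mem_c0I_iff_tendsto hL.1.1]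

theorem c0I_inter (I J : Set (Set ℕ)) : c0I (I ∩ J) = c0I I ∩ c0I J := by
  ext x
  simp only [c0I, mem_inter_iff, mem_ofPred_eq, forall_and]

theorem c0I_iInter {ι : Sort*} (L : ι → Set (Set ℕ)) : c0I (⋂ i, L i) = ⋂ i, c0I (L i) := by
  ext x
  simp only [c0I, mem_iInter, mem_ofPred_eq]
  tauto

theorem idealComplemented_iff_closedComplemented {I : Set (Set ℕ)} :
    IdealComplemented I ↔
      ∃ p : Submodule ℝ ellInf, p.ClosedComplemented ∧ (p : Set ellInf) = c0I I := by
  constructor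
  · rintro ⟨P, hP, hrange⟩
    have hidem : IsIdempotentElem P := ContinuousLinearMap.ext hP
    exact ⟨P.range,
      (ContinuousLinearMap.IsIdempotentElem.isTopCompl hidem).closedComplemented, hrange⟩
  · rintro ⟨p, ⟨f, hf⟩, hp⟩
    refine ⟨p.subtypeL ∘L f, fun x => congrArg Subtype.val (hf (f x)), ?_⟩
    have hsurj : Function.Surjective f := Function.RightInverse.surjective hf
    rw [ContinuousLinearMap.coe_comp, hsurj.range_comp, Submodule.coe_subtypeL,
      Submodule.coe_subtype, Subtype.range_coe, hp]

theorem IdealComplemented.of_c0I_eq_inter_ker {I J : Set (Set ℕ)} {F : Type*} [AddCommGroup F]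
    [Module ℝ F] [TopologicalSpace F] [T2Space F] (hJ : IdealComplemented J) (f : ellInf →L[ℝ] F)
    [FiniteDimensional ℝ f.range] (hI : c0I I = c0I J ∩ f.ker) : IdealComplemented I := by
  obtain ⟨p, hp, hpJ⟩ := idealComplemented_iff_closedComplemented.1 hJ
  refine idealComplemented_iff_closedComplemented.2 ⟨p ⊓ f.ker, closedComplemented_inf_ker hp f, ?_⟩
  rw [Submodule.coe_inf, hpJ, hI]

/-- If `J` is complemented and `I` is `k`-maximal in `J`, then `I` is complemented. -/
theorem complemented_of_kMaximalIn (I J : Set (Set ℕ)) (hI : IsIdeal I) (hJ : IsIdeal J)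
    (hIJ : I ⊆ J) (hne : I ≠ J) (k : ℕ) (hk : 0 < k)
    (hJc : IdealComplemented J) (hkmax : kMaximalIn I J k) :
    IdealComplemented I := by
  obtain ⟨L, -, hL, -, rfl⟩ := hkmax
  let f : ellInf →L[ℝ] Fin k → ℝ := .pi fun i => ultrafilterLim ℝ (hL i).dualUltrafilter
  have hker : (f.ker : Set ellInf) = c0I (⋂ i, L i) := by
    ext x
    simp only [c0I_iInter, mem_iInter, mem_c0I_iff_ultrafilterLim_eq_zero (hL _)]
    exact funext_iff
  apply hJc.of_c0I_eq_inter_ker f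
  rw [c0I_inter, hker, inter_comm]
end

section
/- Let I be an ideal on ℕ and let A ⊆ B ⊆ ℕ be infinite sets with A ∉ I. If c_{0,I↾B} is complemented in ℓ∞(B) (there is a continuous linear map P : ℓ∞(B) → ℓ∞(B) with P ∘ P = P and range c_{0,I↾B}), then c_{0,I↾A} is complemented in ℓ∞(A). In particular, if I is complemented then c_{0,I↾A} is complemented in ℓ∞(A) for every A ∉ I. -/
open Set

/-- The restriction of an ideal `I` to a set `A`: `{A ∩ C : C ∈ I}`. -/
def restrictIdeal (I : Set (Set ℕ)) (A : Set ℕ) : Set (Set ℕ) :=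
  {B | ∃ C ∈ I, B = A ∩ C}

/-- ℓ∞(A), the bounded real-valued functions on `A ⊆ ℕ`. -/
noncomputable abbrev ellInfOn (A : Set ℕ) := lp (fun _ : ↥A => ℝ) ⊤

/-- `c_{0,I↾A}` inside ℓ∞(A). -/
def c0Restrict (I : Set (Set ℕ)) (A : Set ℕ) : Set (ellInfOn A) :=
  {x | ∀ ε > 0, {n : ℕ | ∃ h : n ∈ A, ε ≤ |x ⟨n, h⟩|} ∈ restrictIdeal I A}

/-- `I↾A` is complemented in `A`: `c_{0,I↾A}` is the range of a continuous linear
projection on ℓ∞(A). -/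
def ComplementedOn (I : Set (Set ℕ)) (A : Set ℕ) : Prop :=
  ∃ P : ellInfOn A →L[ℝ] ellInfOn A, (∀ x, P (P x) = P x) ∧ Set.range P = c0Restrict I A

/-!
Let `J : ℓ∞(A) → ℓ∞(B)` be extension by zero and `R : ℓ∞(B) → ℓ∞(A)` restriction. Then
`R ∘ J = id`, `J` maps `c_{0,I↾A}` into `c_{0,I↾B}`, and `R` maps `c_{0,I↾B}` into `c_{0,I↾A}`. So
if `P` is a projection of `ℓ∞(B)` onto `c_{0,I↾B}`, then `R ∘ P ∘ J` is a projection of `ℓ∞(A)` onto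
`c_{0,I↾A}`.
-/

section ProjectionRange

variable (R : Type*) [Semiring R] {M N : Type*} [AddCommMonoid M] [TopologicalSpace M] [Module R M]
  [AddCommMonoid N] [TopologicalSpace N] [Module R N]

/-- `S` is a complemented subspace of `M`, i.e. the range of a continuous linear projection. It is
a set rather than a `Submodule` because `c_{0,J}` need not be a subspace for a mere lower set `J`;
compare `Submodule.ClosedComplemented`. -/
def IsProjectionRange (S : Set M) : Prop :=
  ∃ P : M →L[R] M, (∀ x, P (P x) = P x) ∧ range P = S

variable {R}

theorem IsProjectionRange.of_leftInverse {S : Set M} {T : Set N} (hT : IsProjectionRange R T)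
    {J : M →L[R] N} {K : N →L[R] M} (hKJ : Function.LeftInverse K J) (hJ : MapsTo J S T)
    (hK : MapsTo K T S) : IsProjectionRange R S := by
  obtain ⟨P, hP, rfl⟩ := hT
  have mem (x : M) : K (P (J x)) ∈ S := hK ⟨J x, rfl⟩
  have fixed {x : M} (hx : x ∈ S) : K (P (J x)) = x := by
    obtain ⟨y, hy⟩ := hJ hx
    rw [← hy, hP, hy, hKJ]
  exact ⟨K ∘L P ∘L J, fun x => fixed (mem x),
    Subset.antisymm (range_subset_iff.2 mem) fun x hx => ⟨x, fixed hx⟩⟩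

end ProjectionRange

section BoundedFunctions

open scoped ENNReal lp

variable {ι κ : Type*} (𝕜 E : Type*) [NormedRing 𝕜] [NormedAddCommGroup E] [Module 𝕜 E]
  [IsBoundedSMul 𝕜 E]

/-- Composition with `e : κ → ι`, as a continuous linear map `ℓ^∞(ι, E) → ℓ^∞(κ, E)`; for the
inclusion of a subset it is restriction of bounded functions. -/
noncomputable def lpInftyComp (e : κ → ι) : ℓ^∞(ι, E) →L[𝕜] ℓ^∞(κ, E) :=
  LinearMap.mkContinuous
    { toFun x := ⟨x ∘ e, memℓp_infty <|
        (lp.memℓp x).bddAbove.mono <| range_comp_subset_range e fun i => ‖x i‖⟩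
      map_add' _ _ := rfl
      map_smul' _ _ := rfl } 1 fun x => by
    rw [one_mul]
    exact lp.norm_le_of_forall_le (norm_nonneg x) fun k =>
      lp.norm_apply_le_norm ENNReal.top_ne_zero x (e k)

@[simp]
theorem lpInftyComp_apply (e : κ → ι) (x : ℓ^∞(ι, E)) (k : κ) :
    lpInftyComp 𝕜 E e x k = x (e k) :=
  rfl

variable {E} in
theorem norm_extend_zero_le (e : κ → ι) {x : κ → E} {C : ℝ} (hC : 0 ≤ C) (hx : ∀ k, ‖x k‖ ≤ C)
    (i : ι) : ‖Function.extend e x 0 i‖ ≤ C := by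
  classical
  rw [Function.extend_def]
  split_ifs with hi
  · exact hx _
  · rwa [Pi.zero_apply, norm_zero]

/-- Extension by zero along `e : κ → ι`, as a continuous linear map `ℓ^∞(κ, E) → ℓ^∞(ι, E)`. As for
`Function.extend`, its values are only meaningful for injective `e`. -/
noncomputable def lpInftyExtend (e : κ → ι) : ℓ^∞(κ, E) →L[𝕜] ℓ^∞(ι, E) :=
  LinearMap.mkContinuous
    { toFun x := ⟨Function.extend e x 0, memℓp_infty ⟨‖x‖, forall_mem_range.2 <|
        norm_extend_zero_le e (norm_nonneg x) (lp.norm_apply_le_norm ENNReal.top_ne_zero x)⟩⟩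
      map_add' x y := Subtype.ext <| by
        change Function.extend e (⇑x + ⇑y) 0 = Function.extend e x 0 + Function.extend e y 0
        rw [← Function.extend_add, add_zero]
      map_smul' c x := Subtype.ext <| by
        change Function.extend e (c • ⇑x) 0 = c • Function.extend e x 0
        rw [← Function.extend_smul, smul_zero] } 1 fun x => by
    rw [one_mul]
    exact lp.norm_le_of_forall_le (norm_nonneg x) <|
      norm_extend_zero_le e (norm_nonneg x) (lp.norm_apply_le_norm ENNReal.top_ne_zero x)

@[simp]
theorem coe_lpInftyExtend (e : κ → ι) (x : ℓ^∞(κ, E)) :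
    ⇑(lpInftyExtend 𝕜 E e x) = Function.extend e x 0 :=
  rfl

variable {e : κ → ι}

theorem lpInftyComp_leftInverse_lpInftyExtend (he : e.Injective) :
    Function.LeftInverse (lpInftyComp 𝕜 E e) (lpInftyExtend 𝕜 E e) := fun x => by
  ext k
  simp only [lpInftyComp_apply, coe_lpInftyExtend, he.extend_apply]

/-- The space `c_{0,J}` of bounded functions on `ι` that converge to zero along a family `J` of
subsets of `ι`, which is usually an ideal. -/
def c0Along (J : Set (Set ι)) : Set ℓ^∞(ι, E) :=
  {x | ∀ ε > 0, {i | ε ≤ ‖x i‖} ∈ J}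

variable {E} in
theorem setOf_le_norm_extend_zero (he : e.Injective) (x : κ → E) {ε : ℝ} (hε : 0 < ε) :
    {i | ε ≤ ‖Function.extend e x 0 i‖} = e '' {k | ε ≤ ‖x k‖} := by
  ext i
  by_cases hi : ∃ k, e k = i
  · obtain ⟨k, rfl⟩ := hi
    simp only [mem_ofPred_eq, he.extend_apply, he.mem_set_image]
  · have hi' : i ∉ e '' {k | ε ≤ ‖x k‖} := fun ⟨k, _, hk⟩ => hi ⟨k, hk⟩
    simp only [mem_ofPred_eq, Function.extend_apply' _ _ _ hi, Pi.zero_apply, norm_zero,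
      hε.not_ge, hi']

theorem mapsTo_lpInftyExtend_c0Along (he : e.Injective) (J : Set (Set ι)) :
    MapsTo (lpInftyExtend 𝕜 E e) (c0Along E (image e ⁻¹' J)) (c0Along E J) := fun x hx ε hε => by
  rw [coe_lpInftyExtend, setOf_le_norm_extend_zero he x hε]
  exact hx ε hε

theorem mapsTo_lpInftyComp_c0Along (e : κ → ι) {J : Set (Set ι)} (hJ : IsLowerSet J) :
    MapsTo (lpInftyComp 𝕜 E e) (c0Along E J) (c0Along E (image e ⁻¹' J)) := fun x hx ε hε =>
  hJ (image_preimage_subset e {i | ε ≤ ‖x i‖}) (hx ε hε)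

variable {𝕜 E} in
/-- `image e ⁻¹' J` plays the role of the restriction of the ideal `J` to the range of `e`. -/
theorem complementedOn_of_subset_general {J : Set (Set ι)} (hJ : IsLowerSet J) (he : e.Injective)
    (h : IsProjectionRange 𝕜 (c0Along E J)) :
    IsProjectionRange 𝕜 (c0Along E (image e ⁻¹' J)) :=
  h.of_leftInverse (lpInftyComp_leftInverse_lpInftyExtend 𝕜 E he)
    (mapsTo_lpInftyExtend_c0Along 𝕜 E he J) (mapsTo_lpInftyComp_c0Along 𝕜 E e hJ)

end BoundedFunctions

section Restriction

variable {I : Set (Set ℕ)} {A B : Set ℕ}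

theorem IsIdeal.isLowerSet (hI : IsIdeal I) : IsLowerSet I :=
  fun t s hst ht => hI.2.1 s t hst ht

theorem mem_restrictIdeal_iff (hI : IsLowerSet I) {s : Set ℕ} (hs : s ⊆ A) :
    s ∈ restrictIdeal I A ↔ s ∈ I := by
  constructor
  · rintro ⟨C, hC, rfl⟩
    exact hI inter_subset_right hC
  · exact fun h => ⟨s, h, (inter_eq_right.2 hs).symm⟩

theorem c0Restrict_eq_c0Along (hI : IsLowerSet I) (A : Set ℕ) :
    c0Restrict I A = c0Along ℝ (image ((↑) : A → ℕ) ⁻¹' I) := by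
  ext x
  refine forall₂_congr fun ε _ => ?_
  have hlevel : {n : ℕ | ∃ h : n ∈ A, ε ≤ |x ⟨n, h⟩|} = (↑) '' {a : A | ε ≤ ‖x a‖} := by
    ext n
    simp only [mem_ofPred_eq, mem_image, Subtype.exists, exists_and_right, exists_eq_right,
      Real.norm_eq_abs]
  rw [hlevel, mem_restrictIdeal_iff hI (Subtype.coe_image_subset A _), mem_preimage]

theorem complementedOn_iff (hI : IsLowerSet I) :
    ComplementedOn I A ↔ IsProjectionRange ℝ (c0Along ℝ (image ((↑) : A → ℕ) ⁻¹' I)) := by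
  rw [← c0Restrict_eq_c0Along hI]
  rfl

theorem idealComplemented_iff : IdealComplemented I ↔ IsProjectionRange ℝ (c0Along ℝ I) :=
  Iff.rfl

theorem image_inclusion_preimage_image_coe_preimage (hAB : A ⊆ B) (I : Set (Set ℕ)) :
    image (inclusion hAB) ⁻¹' (image ((↑) : B → ℕ) ⁻¹' I) = image ((↑) : A → ℕ) ⁻¹' I := by
  rw [← preimage_comp, ← image_comp_eq, val_comp_inclusion]

theorem ComplementedOn.subset (hI : IsLowerSet I) (h : ComplementedOn I B) (hAB : A ⊆ B) :
    ComplementedOn I A := by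
  rw [complementedOn_iff hI] at h ⊢
  rw [← image_inclusion_preimage_image_coe_preimage hAB]
  exact complementedOn_of_subset_general (hI.preimage monotone_image) (inclusion_injective hAB) h

theorem IdealComplemented.complementedOn (hI : IsLowerSet I) (h : IdealComplemented I) :
    ComplementedOn I A := by
  rw [idealComplemented_iff] at h
  rw [complementedOn_iff hI]
  exact complementedOn_of_subset_general hI Subtype.val_injective h

end Restriction

/-- If `A ⊆ B` are infinite with `A ∉ I` and `I↾B` is complemented in `B`, then `I↾A` is
complemented in `A`; in particular, if `I` is complemented then `I↾A` is complemented in `A`. -/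
theorem complementedOn_of_subset (I : Set (Set ℕ)) (hI : IsIdeal I) (A B : Set ℕ)
    (hAB : A ⊆ B) (hAinf : A.Infinite) (hBinf : B.Infinite) (hA : A ∉ I) :
    (ComplementedOn I B → ComplementedOn I A) ∧
      (IdealComplemented I → ComplementedOn I A) := by
  exact ⟨fun h => h.subset hI.isLowerSet hAB, fun h => h.complementedOn hI.isLowerSet⟩
end

section
/- Let {I_n : n ∈ ℕ} be a collection of maximal ideals on ℕ and let {A_n : n ∈ ℕ} be a collection of pairwise disjoint subsets of ℕ such that ℕ \ A_n ∈ I_n for each n. Let I = ⋂_{n ∈ ℕ} I_n. Define P : ℓ∞ → ℓ∞ coordinatewise by (P x)(k) = x k − L_m(x) if k ∈ A_m (where L_m(x) denotes the I_m*-limit of x), and (P x)(k) = x k if k ∉ ⋃_n A_n. Then P is a well-defined (in particular, P x is a bounded sequence for every x ∈ ℓ∞) continuous linear map from ℓ∞ to ℓ∞ satisfying P ∘ P = P whose range is exactly c_{0,I}. -/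
/-!
Let `Λ : ℓ∞(α) → ℓ∞(ι)` collect the limits of a bounded function along the given filters, and let
`S : ℓ∞(ι) → ℓ∞(α)` spread the value `y i` over the block `A i`. Since `A i` belongs to the `i`-th
filter, `S y` has limit `y i` along it, so `Λ ∘ S = id`. Hence `1 - S ∘ Λ` is a projection onto
`ker Λ`, the functions whose limits all vanish.
-/

open Set

open Filter Topology Function
open scoped ENNReal

namespace IsIdeal

/-- The filter `I*` dual to an ideal `I`, consisting of the complements of the members of `I`. -/
def dualFilter_s13 {I : Set (Set ℕ)} (hI : IsIdeal I) : Filter ℕ :=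
  comk (· ∈ I) (hI.1 ∅ finite_empty) (fun B hB A hAB => hI.2.1 A B hAB hB)
    (fun A hA B hB => hI.2.2 A B hA hB)

theorem tendsto_dualFilter_iff {I : Set (Set ℕ)} (hI : IsIdeal I) {x : ℕ → ℝ} {a : ℝ} :
    Tendsto x hI.dualFilter_s13 (𝓝 a) ↔ ∀ ε > 0, {n | ε ≤ |x n - a|} ∈ I := by
  simp [Metric.tendsto_nhds, Filter.Eventually, dualFilter_s13, compl_ofPred, Real.dist_eq]

end IsIdeal

theorem IsProperIdeal.neBot_dualFilter {I : Set (Set ℕ)} (hI : IsProperIdeal I) :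
    hI.1.dualFilter_s13.NeBot :=
  ⟨fun h => hI.2 (by simpa [IsIdeal.dualFilter_s13] using empty_mem_iff_bot.2 h)⟩

theorem c0I_iInter_s13 {ι : Type*} {I : ι → Set (Set ℕ)} (hI : ∀ i, IsIdeal (I i)) :
    c0I (⋂ i, I i) = {x : ellInf | Tendsto x (⨆ i, (hI i).dualFilter_s13) (𝓝 0)} := by
  ext x
  simp only [c0I, mem_ofPred_eq, mem_iInter, tendsto_iSup, IsIdeal.tendsto_dualFilter_iff, sub_zero]
  exact ⟨fun h i ε hε => h ε hε i, fun h ε hε i => h i ε hε⟩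

section Limits

variable {α ι 𝕜 E : Type*} [NormedField 𝕜] [NormedAddCommGroup E] [NormedSpace 𝕜 E]
  {F : ι → Filter α} [∀ i, (F i).NeBot] {L : lp (fun _ : α => E) ∞ → ι → E}

theorem norm_le_of_tendsto_lp_infty {l : Filter α} [l.NeBot] {x : lp (fun _ : α => E) ∞} {a : E}
    (h : Tendsto x l (𝓝 a)) : ‖a‖ ≤ ‖x‖ :=
  le_of_tendsto h.norm (.of_forall (lp.norm_apply_le_norm ENNReal.top_ne_zero x))

variable (𝕜) in
/-- The operator `Λ` sending a bounded function to the bounded family of its limits along the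
filters `F i`. The limits are supplied as a function `L` because for infinite-dimensional `E` a
bounded function may have no limit even along an ultrafilter. -/
noncomputable def limitCLM (hL : ∀ (x : lp (fun _ : α => E) ∞) i, Tendsto x (F i) (𝓝 (L x i))) :
    lp (fun _ : α => E) ∞ →L[𝕜] lp (fun _ : ι => E) ∞ :=
  LinearMap.mkContinuous
    { toFun x := ⟨L x, memℓp_infty ⟨‖x‖, forall_mem_range.2 fun i =>
        norm_le_of_tendsto_lp_infty (hL x i)⟩⟩
      map_add' x y := lp.ext <| funext fun i =>
        tendsto_nhds_unique (hL (x + y) i) ((hL x i).add (hL y i))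
      map_smul' c x := lp.ext <| funext fun i =>
        tendsto_nhds_unique (hL (c • x) i) ((hL x i).const_smul c) }
    1 fun x => by
      simpa only [one_mul] using lp.norm_le_of_forall_le (norm_nonneg x) fun i =>
        norm_le_of_tendsto_lp_infty (hL x i)

theorem mem_ker_limitCLM_iff (hL : ∀ (x : lp (fun _ : α => E) ∞) i, Tendsto x (F i) (𝓝 (L x i)))
    {x : lp (fun _ : α => E) ∞} :
    x ∈ (limitCLM 𝕜 hL).ker ↔ Tendsto x (⨆ i, F i) (𝓝 0) := by
  rw [tendsto_iSup]
  constructor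
  · intro hx i
    have hLx : L x i = 0 := congr($hx i)
    exact hLx ▸ hL x i
  · exact fun hx => lp.ext <| funext fun i => tendsto_nhds_unique (hL x i) (hx i)

end Limits

section BlockFun

variable {α ι M : Type*} [AddCommMonoid M] {A : ι → Set α}

/-- The function with constant value `y i` on each block `A i` and `0` off the blocks, written as
`∑ i, y i · χ_{A i}`. For pairwise disjoint blocks at most one term is nonzero at each point; for
overlapping ones `∑ᶠ` may take its junk value `0`. -/
noncomputable def blockFun (A : ι → Set α) (y : ι → M) (k : α) : M :=
  ∑ᶠ i, (A i).indicator (fun _ => y i) k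

theorem blockFun_of_mem (hA : Pairwise (Disjoint on A)) (y : ι → M) {i : ι} {k : α}
    (hk : k ∈ A i) : blockFun A y k = y i := by
  rw [blockFun, finsum_eq_single _ i fun j hj => ?_, indicator_of_mem hk]
  exact indicator_of_notMem (disjoint_left.1 (hA hj.symm) hk) _

theorem blockFun_of_notMem (y : ι → M) {k : α} (hk : k ∉ ⋃ i, A i) : blockFun A y k = 0 :=
  finsum_eq_zero_of_forall_eq_zero fun i =>
    indicator_of_notMem (fun hi => hk (mem_iUnion_of_mem i hi)) _

theorem blockFun_add (hA : Pairwise (Disjoint on A)) (y z : ι → M) :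
    blockFun A (y + z) = blockFun A y + blockFun A z := by
  ext k
  by_cases hk : k ∈ ⋃ i, A i
  · obtain ⟨i, hi⟩ := mem_iUnion.1 hk
    simp [blockFun_of_mem hA _ hi]
  · simp [blockFun_of_notMem _ hk]

theorem blockFun_smul {R : Type*} [SMulZeroClass R M] (hA : Pairwise (Disjoint on A)) (c : R)
    (y : ι → M) : blockFun A (c • y) = c • blockFun A y := by
  ext k
  by_cases hk : k ∈ ⋃ i, A i
  · obtain ⟨i, hi⟩ := mem_iUnion.1 hk
    simp [blockFun_of_mem hA _ hi]
  · simp [blockFun_of_notMem _ hk]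

theorem tendsto_blockFun [TopologicalSpace M] (hA : Pairwise (Disjoint on A)) (y : ι → M)
    {l : Filter α} {i : ι} (hl : A i ∈ l) : Tendsto (blockFun A y) l (𝓝 (y i)) :=
  tendsto_const_nhds.congr' <| mem_of_superset hl fun _ hk => (blockFun_of_mem hA y hk).symm

end BlockFun

section BlockCLM

variable {α ι 𝕜 E : Type*} [NormedField 𝕜] [NormedAddCommGroup E] [NormedSpace 𝕜 E]
  {A : ι → Set α}

theorem norm_blockFun_le (hA : Pairwise (Disjoint on A)) (y : lp (fun _ : ι => E) ∞) (k : α) :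
    ‖blockFun A y k‖ ≤ ‖y‖ := by
  by_cases hk : k ∈ ⋃ i, A i
  · obtain ⟨i, hi⟩ := mem_iUnion.1 hk
    exact blockFun_of_mem hA y hi ▸ lp.norm_apply_le_norm ENNReal.top_ne_zero y i
  · simp [blockFun_of_notMem _ hk]

variable (𝕜) in
/-- The operator `S : y ↦ ∑ i, y i · χ_{A i}` on bounded families, for pairwise disjoint `A i`. -/
noncomputable def blockCLM (hA : Pairwise (Disjoint on A)) :
    lp (fun _ : ι => E) ∞ →L[𝕜] lp (fun _ : α => E) ∞ :=
  LinearMap.mkContinuous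
    { toFun y := ⟨blockFun A y, memℓp_infty ⟨‖y‖, forall_mem_range.2 (norm_blockFun_le hA y)⟩⟩
      map_add' y z := lp.ext (blockFun_add hA y z)
      map_smul' c y := lp.ext (blockFun_smul hA c y) }
    1 fun y => by
      simpa only [one_mul] using lp.norm_le_of_forall_le (norm_nonneg y) (norm_blockFun_le hA y)

theorem rightInverse_blockCLM_limitCLM {F : ι → Filter α} [∀ i, (F i).NeBot]
    {L : lp (fun _ : α => E) ∞ → ι → E} (hdisj : Pairwise (Disjoint on A)) (hA : ∀ i, A i ∈ F i)
    (hL : ∀ (x : lp (fun _ : α => E) ∞) i, Tendsto x (F i) (𝓝 (L x i))) :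
    RightInverse (blockCLM 𝕜 hdisj) (limitCLM 𝕜 hL) := fun y =>
  lp.ext <| funext fun i =>
    tendsto_nhds_unique (hL (blockCLM 𝕜 hdisj y) i) (tendsto_blockFun hdisj y (hA i))

end BlockCLM

theorem projection_formula_general {α ι 𝕜 E : Type*} [NormedField 𝕜] [NormedAddCommGroup E]
    [NormedSpace 𝕜 E] (F : ι → Filter α) [∀ i, (F i).NeBot]
    (A : ι → Set α) (hdisj : Pairwise fun i j => Disjoint (A i) (A j)) (hA : ∀ i, A i ∈ F i)
    (L : lp (fun _ : α => E) ∞ → ι → E)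
    (hL : ∀ (x : lp (fun _ : α => E) ∞) i, Tendsto x (F i) (𝓝 (L x i))) :
    ∃ P : lp (fun _ : α => E) ∞ →L[𝕜] lp (fun _ : α => E) ∞,
      (∀ x i, ∀ k ∈ A i, P x k = x k - L x i) ∧
      (∀ x, ∀ k ∉ ⋃ i, A i, P x k = x k) ∧
      (∀ x, P (P x) = P x) ∧
      range P = {x : lp (fun _ : α => E) ∞ | Tendsto x (⨆ i, F i) (𝓝 0)} := by
  let Λ := limitCLM 𝕜 hL
  let S := blockCLM 𝕜 (E := E) hdisj
  have hΛS : RightInverse S Λ := rightInverse_blockCLM_limitCLM hdisj hA hL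
  let Q : lp (fun _ : α => E) ∞ →L[𝕜] Λ.ker := Λ.projKerOfRightInverse S hΛS
  have hQ (x) (k : α) : (Q x : lp (fun _ : α => E) ∞) k = x k - blockFun A (L x) k := rfl
  have hQ_leftInverse : LeftInverse Q Λ.ker.subtypeL := Λ.projKerOfRightInverse_apply_idem S hΛS
  refine ⟨Λ.ker.subtypeL ∘L Q, fun x i k hk => ?_, fun x k hk => ?_, fun x => ?_, ?_⟩
  · exact (hQ x k).trans (by rw [blockFun_of_mem hdisj _ hk])
  · exact (hQ x k).trans (by rw [blockFun_of_notMem _ hk, sub_zero])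
  · exact congr(Λ.ker.subtypeL $(hQ_leftInverse (Q x)))
  · calc
      range (Λ.ker.subtypeL ∘L Q) = range Λ.ker.subtypeL :=
        hQ_leftInverse.surjective.range_comp Λ.ker.subtypeL
      _ = {x : lp (fun _ : α => E) ∞ | Tendsto x (⨆ i, F i) (𝓝 0)} :=
        Subtype.range_coe.trans <| ext fun _ => mem_ker_limitCLM_iff hL

/-- Given maximal ideals `Iₙ` and pairwise disjoint sets `Aₙ` with `Aₙ ∈ Iₙ*`, the map
`x ↦ x − Σₘ (Iₘ*-lim x)·χ_{Aₘ}` is a well-defined continuous linear projection of ℓ∞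
onto `c_{0,⋂ₙ Iₙ}`. Here `L x m` denotes the `Iₘ*`-limit of `x`. -/
theorem projection_formula (I : ℕ → Set (Set ℕ)) (hmax : ∀ n, IsMaxIdeal (I n))
    (A : ℕ → Set ℕ) (hdisj : Pairwise fun m n => Disjoint (A m) (A n))
    (hA : ∀ n, (A n)ᶜ ∈ I n)
    (L : ellInf → ℕ → ℝ)
    (hL : ∀ (x : ellInf) (m : ℕ), ∀ ε > 0, {n : ℕ | ε ≤ |x n - L x m|} ∈ I m) :
    ∃ P : ellInf →L[ℝ] ellInf,
      (∀ (x : ellInf) (m : ℕ), ∀ k ∈ A m, (P x) k = x k - L x m) ∧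
      (∀ (x : ellInf) (k : ℕ), k ∉ ⋃ m, A m → (P x) k = x k) ∧
      (∀ x, P (P x) = P x) ∧
      Set.range P = c0I (⋂ n, I n) := by
  have (n : ℕ) := (hmax n).1.neBot_dualFilter
  rw [c0I_iInter_s13 fun n => (hmax n).1.1]
  exact projection_formula_general (fun n => (hmax n).1.1.dualFilter_s13) A hdisj hA L
    fun x n => (IsIdeal.tendsto_dualFilter_iff _).2 (hL x n)
end

section
/- Let I be a proper ideal on ℕ. Suppose there is a continuous linear map Q : ℓ∞ → ℓ∞ and a function T : Set ℕ → Set ℕ such that: Q ∘ Q = Q; Q is positive (if x n ≥ 0 for all n then (Q x) n ≥ 0 for all n); the kernel of Q is exactly c_{0,I}; Q(χ_A) = χ_{T(A)} for every A ⊆ ℕ; T(A ∩ B) = T(A) ∩ T(B) for all A, B ⊆ ℕ; and the family ℬ = {B ⊆ ℕ : T(B) = B} is closed under arbitrary nonempty intersections. Then there exists a countable (finite or countably infinite) discrete collection of pairwise distinct maximal ideals on ℕ whose intersection equals I. -/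
open Set

/-- `U` is the dual ultrafilter of the (maximal) ideal `I`: `A ∈ U ↔ Aᶜ ∈ I`. -/
def IsDualUltra (I : Set (Set ℕ)) (U : Ultrafilter ℕ) : Prop :=
  ∀ A : Set ℕ, A ∈ U ↔ Aᶜ ∈ I

/-- A set is a discrete subset of a topological space if each of its points is isolated in it. -/
def IsDiscreteSubset {X : Type*} [TopologicalSpace X] (S : Set X) : Prop :=
  ∀ x ∈ S, ∃ V : Set X, IsOpen V ∧ V ∩ S = {x}

/-- The set of dual ultrafilters of a collection of maximal ideals. -/
def DualSet (D : Set (Set (Set ℕ))) : Set (Ultrafilter ℕ) :=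
  {U | ∃ K ∈ D, IsDualUltra K U}

/-- An ideal is strongly ω-maximal if it is the intersection of a countably infinite
discrete collection of pairwise distinct maximal ideals. -/
def StronglyOmegaMax (I : Set (Set ℕ)) : Prop :=
  ∃ J : ℕ → Set (Set ℕ), (∀ n, IsMaxIdeal (J n)) ∧ (∀ m n, m ≠ n → J m ≠ J n) ∧
    (∃ U : ℕ → Ultrafilter ℕ, (∀ n, IsDualUltra (J n) (U n)) ∧
      IsDiscreteSubset (Set.range U)) ∧
    I = ⋂ n, J n

/-!
Since `Q` is additive, `T` sends disjoint unions to disjoint unions and hence preserves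
differences of sets. So, for each `n ∈ T ℕ`, the sets `A` with `n ∈ T A` form an ultrafilter
`Uₙ`. The kernel condition says that `A ∈ I` iff `T A = ∅`, that is, iff `A` lies in none of the
`Uₙ`, so `I` is the intersection of the dual ideals. The least fixed set `M` of `T` containing `n`
isolates `Uₙ`: if `M ∈ Uₘ` then `m ∈ T M = M`, so `m` lies in every fixed set containing `n`, in
particular in every `T A` with `A ∈ Uₙ`; hence `Uₙ = Uₘ`.
-/

/-- The dual ideal of an ultrafilter: the ideal of complements of its members. -/
def dualIdeal {α : Type*} (U : Ultrafilter α) : Set (Set α) := {A | Aᶜ ∈ U}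

lemma mem_dualIdeal {α : Type*} {U : Ultrafilter α} {A : Set α} : A ∈ dualIdeal U ↔ A ∉ U :=
  Ultrafilter.compl_mem_iff_notMem

lemma isMaxIdeal_dualIdeal {U : Ultrafilter ℕ} (hU : (U : Filter ℕ) ≤ Filter.cofinite) :
    IsMaxIdeal (dualIdeal U) := by
  refine ⟨⟨⟨fun A hA => hU hA.compl_mem_cofinite, fun A B hAB hB => ?_, fun A B hA hB => ?_⟩, ?_⟩,
    fun A => ?_⟩
  · exact Filter.mem_of_superset hB (compl_subset_compl.2 hAB)
  · simpa only [mem_dualIdeal, Ultrafilter.union_mem_iff, not_or] using And.intro hA hB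
  · exact fun h => mem_dualIdeal.1 h Filter.univ_mem
  · simpa only [mem_dualIdeal, Ultrafilter.compl_mem_iff_notMem, not_not] using
      (em (A ∈ U)).symm

lemma isDualUltra_dualIdeal_iff {U W : Ultrafilter ℕ} : IsDualUltra (dualIdeal U) W ↔ W = U := by
  simp only [IsDualUltra, mem_dualIdeal, Ultrafilter.compl_mem_iff_notMem, not_not]
  exact Ultrafilter.ext_iff.symm

lemma dualSet_image_dualIdeal (𝒰 : Set (Ultrafilter ℕ)) : DualSet (dualIdeal '' 𝒰) = 𝒰 := by
  simp only [DualSet, exists_mem_image, isDualUltra_dualIdeal_iff, exists_eq_right', ofPred_mem_eq]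

/-- A homomorphism of generalized Boolean algebras between power sets. Preserving differences
entails preserving `∩` and `∅`; the top element need not be preserved. -/
def PreservesSDiff {α β : Type*} (T : Set α → Set β) : Prop :=
  ∀ A B, T (A \ B) = T A \ T B

lemma preservesSDiff_of_disjoint_union {α β : Type*} {T : Set α → Set β}
    (h : ∀ A B, Disjoint A B → Disjoint (T A) (T B) ∧ T A ∪ T B = T (A ∪ B)) :
    PreservesSDiff T := by
  intro A B
  have hdisj : Disjoint (T (A \ B)) (T B) := (h _ _ disjoint_sdiff_left).1
  have hsplit (C D : Set α) : T (C \ D) ∪ T (C ∩ D) = T C := by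
    rw [(h _ _ disjoint_sdiff_inter).2, sdiff_union_inter]
  have hsub : T (A ∩ B) ⊆ T B := by
    rw [inter_comm, ← hsplit B A]
    exact subset_union_right
  rw [← hsplit A B, union_sdiff_distrib, hdisj.sdiff_eq_left, sdiff_eq_empty.2 hsub, union_empty]

namespace PreservesSDiff

section

variable {α β : Type*} {T : Set α → Set β} (hT : PreservesSDiff T)
include hT

lemma map_inter (A B : Set α) : T (A ∩ B) = T A ∩ T B := by
  rw [← sdiff_sdiff_right_self, hT, hT, sdiff_sdiff_right_self]

lemma monotone : Monotone T := fun A B hAB =>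
  inter_eq_left.1 <| by rw [← hT.map_inter, inter_eq_left.2 hAB]

lemma mem_map_compl_iff {b : β} (hb : b ∈ T univ) {A : Set α} : b ∈ T Aᶜ ↔ b ∉ T A := by
  rw [compl_eq_univ_sdiff, hT, mem_sdiff, and_iff_right hb]

/-- The preimage under `T` of the principal ultrafilter at a point of `T univ`: it consists of the
sets `A` such that `T A` contains the point. -/
def ultrafilterAt (b : T univ) : Ultrafilter α :=
  Ultrafilter.ofComplNotMemIff
    { sets := {A | (b : β) ∈ T A}
      univ_sets := b.2
      sets_of_superset := fun hA hAB => hT.monotone hAB hA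
      inter_sets := fun {A B} hA hB => (hT.map_inter A B).ge ⟨hA, hB⟩ }
    fun _ => (hT.mem_map_compl_iff b.2).not_left

lemma mem_ultrafilterAt {b : T univ} {A : Set α} : A ∈ hT.ultrafilterAt b ↔ ↑b ∈ T A := Iff.rfl

lemma ultrafilterAt_le_cofinite (hfin : ∀ A : Set α, A.Finite → T A = ∅) (b : T univ) :
    (hT.ultrafilterAt b : Filter α) ≤ Filter.cofinite := by
  intro A hA
  rw [Ultrafilter.mem_coe, ← Ultrafilter.compl_notMem_iff, mem_ultrafilterAt,
    hfin Aᶜ (Filter.mem_cofinite.1 hA)]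
  exact notMem_empty _

lemma sInter_image_dualIdeal_range_ultrafilterAt :
    ⋂₀ (dualIdeal '' range hT.ultrafilterAt) = {A | T A = ∅} := by
  ext A
  simp only [sInter_image, biInter_range, mem_iInter, mem_dualIdeal, mem_ultrafilterAt,
    Subtype.forall, mem_ofPred_eq, eq_empty_iff_forall_notMem]
  exact ⟨fun h b hb => h b (hT.monotone (subset_univ A) hb) hb, fun h b _ => h b⟩

end

section

variable {α : Type*} {T : Set α → Set α} (hT : PreservesSDiff T) (hTT : ∀ A, T (T A) = T A)
include hTT

lemma ultrafilterAt_eq_of_forall_fixed {a b : T univ} (h : ∀ B, T B = B → ↑a ∈ B → ↑b ∈ B) :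
    hT.ultrafilterAt b = hT.ultrafilterAt a :=
  Ultrafilter.eq_of_le fun A hA => h (T A) (hTT A) hA

lemma isDiscreteSubset_range_ultrafilterAt
    (hfix : ∀ 𝒞 : Set (Set α), 𝒞.Nonempty → (∀ B ∈ 𝒞, T B = B) → T (⋂₀ 𝒞) = ⋂₀ 𝒞) :
    IsDiscreteSubset (range hT.ultrafilterAt) := by
  rintro _ ⟨a, rfl⟩
  let M : Set α := ⋂₀ {B | T B = B ∧ ↑a ∈ B}
  have hTM : T M = M := hfix _ ⟨T univ, hTT univ, a.2⟩ fun B hB => hB.1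
  have mem_iff (b : T univ) : M ∈ hT.ultrafilterAt b ↔ ↑b ∈ M := by rw [mem_ultrafilterAt, hTM]
  refine ⟨{W | M ∈ W}, ultrafilter_isOpen_basic M, Subset.antisymm ?_ ?_⟩
  · rintro _ ⟨hM, b, rfl⟩
    exact hT.ultrafilterAt_eq_of_forall_fixed hTT fun B hB ha => (mem_iff b).1 hM B ⟨hB, ha⟩
  · rintro _ rfl
    exact ⟨(mem_iff a).2 fun B hB => hB.2, a, rfl⟩

end

end PreservesSDiff

lemma chi_apply (A : Set ℕ) (n : ℕ) : chi A n = A.indicator (fun _ => (1 : ℝ)) n := rfl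

lemma chi_injective : Function.Injective chi := fun _ _ h =>
  indicator_one_inj ℝ (congrArg (fun x : ellInf => (x : ℕ → ℝ)) h)

lemma chi_empty : chi ∅ = 0 := by
  ext n
  rw [chi_apply, indicator_empty, lp.coeFn_zero, Pi.zero_apply]

lemma chi_eq_zero_iff {A : Set ℕ} : chi A = 0 ↔ A = ∅ := by
  rw [← chi_empty, chi_injective.eq_iff]

lemma chi_add_chi_eq_iff {A B C : Set ℕ} :
    chi A + chi B = chi C ↔ Disjoint A B ∧ A ∪ B = C := by
  have eq_iff : chi A + chi B = chi C ↔ ∀ n, chi A n + chi B n = chi C n :=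
    lp.ext_iff.trans funext_iff
  simp only [eq_iff, disjoint_left, Set.ext_iff, ← forall_and, mem_union, chi_apply]
  refine forall_congr' fun n => ?_
  by_cases hA : n ∈ A <;> by_cases hB : n ∈ B <;> by_cases hC : n ∈ C <;> simp [hA, hB, hC]

lemma chi_mem_c0I_iff {I : Set (Set ℕ)} (hI : IsIdeal I) {A : Set ℕ} : chi A ∈ c0I I ↔ A ∈ I := by
  constructor
  · refine fun h => hI.2.1 _ _ (fun n hn => ?_) (h 1 one_pos)
    simp [chi_apply, hn]
  · refine fun hA ε hε => hI.2.1 _ _ (fun n hn => ?_) hA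
    by_contra hnA
    have hle : ε ≤ |chi A n| := hn
    rw [chi_apply, indicator_of_notMem hnA, abs_zero] at hle
    exact hle.not_gt hε

lemma preservesSDiff_of_map_chi {Q : ellInf →+ ellInf} {T : Set ℕ → Set ℕ}
    (hchi : ∀ A, Q (chi A) = chi (T A)) : PreservesSDiff T := by
  refine preservesSDiff_of_disjoint_union fun A B hAB => ?_
  rw [← chi_add_chi_eq_iff, ← hchi, ← hchi, ← hchi, ← map_add, chi_add_chi_eq_iff.2 ⟨hAB, rfl⟩]

theorem stronglyOmegaMax_of_projection_general (I : Set (Set ℕ)) (hI : IsProperIdeal I)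
    (Q : ellInf →+ ellInf) (T : Set ℕ → Set ℕ)
    (hQQ : ∀ x, Q (Q x) = Q x)
    (hker : ∀ x : ellInf, Q x = 0 ↔ x ∈ c0I I)
    (hchi : ∀ A : Set ℕ, Q (chi A) = chi (T A))
    (hfix : ∀ 𝒞 : Set (Set ℕ), 𝒞.Nonempty → (∀ B ∈ 𝒞, T B = B) → T (⋂₀ 𝒞) = ⋂₀ 𝒞) :
    ∃ S : Set (Set (Set ℕ)), S.Countable ∧ S.Nonempty ∧ (∀ K ∈ S, IsMaxIdeal K) ∧
      IsDiscreteSubset (DualSet S) ∧ ⋂₀ S = I := by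
  have hT : PreservesSDiff T := preservesSDiff_of_map_chi hchi
  have hTI (A : Set ℕ) : T A = ∅ ↔ A ∈ I := by
    rw [← chi_eq_zero_iff, ← hchi, hker, chi_mem_c0I_iff hI.1]
  have hTT (A : Set ℕ) : T (T A) = T A := chi_injective <| by rw [← hchi, ← hchi, hQQ]
  have : Nonempty (T univ) := nonempty_iff_ne_empty'.2 fun h => hI.2 ((hTI univ).1 h)
  refine ⟨dualIdeal '' range hT.ultrafilterAt, (countable_range _).image _, ?_, ?_, ?_, ?_⟩
  · exact (range_nonempty _).image _
  · rintro _ ⟨_, ⟨n, rfl⟩, rfl⟩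
    exact isMaxIdeal_dualIdeal
      (hT.ultrafilterAt_le_cofinite (fun A hA => (hTI A).2 (hI.1.1 A hA)) n)
  · rw [dualSet_image_dualIdeal]
    exact hT.isDiscreteSubset_range_ultrafilterAt hTT hfix
  · rw [hT.sInter_image_dualIdeal_range_ultrafilterAt]
    exact Set.ext hTI

/-- If there is a positive continuous linear projection `Q` on ℓ∞ with kernel `c_{0,I}`
sending indicator sequences to indicator sequences via a meet-preserving map `T` whose
family of fixed sets is closed under arbitrary nonempty intersections, then `I` is the
intersection of a countable discrete collection of pairwise distinct maximal ideals. -/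
theorem stronglyOmegaMax_of_projection (I : Set (Set ℕ)) (hI : IsProperIdeal I)
    (Q : ellInf →L[ℝ] ellInf) (T : Set ℕ → Set ℕ)
    (hQQ : ∀ x, Q (Q x) = Q x)
    (hpos : ∀ x : ellInf, (∀ n, 0 ≤ x n) → ∀ n, 0 ≤ (Q x) n)
    (hker : ∀ x : ellInf, Q x = 0 ↔ x ∈ c0I I)
    (hchi : ∀ A : Set ℕ, Q (chi A) = chi (T A))
    (hmeet : ∀ A B : Set ℕ, T (A ∩ B) = T A ∩ T B)
    (hfix : ∀ 𝒞 : Set (Set ℕ), 𝒞.Nonempty → (∀ B ∈ 𝒞, T B = B) → T (⋂₀ 𝒞) = ⋂₀ 𝒞) :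
    ∃ S : Set (Set (Set ℕ)), S.Countable ∧ S.Nonempty ∧ (∀ K ∈ S, IsMaxIdeal K) ∧
      IsDiscreteSubset (DualSet S) ∧ ⋂₀ S = I :=
  stronglyOmegaMax_of_projection_general I hI (Q : ellInf →+ ellInf) T hQQ hker hchi hfix
end
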